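/- arXiv:2508.09795 — 2 statements merged into one kernel-verified Lean document; each statement's English description precedes it below -/
import Mathlib

section
/- The function d̂ is a metric on X̂, and for all x, y ∈ X̂ one has (1/4) d_a(x,y) ≤ d̂(x,y) ≤ d_a(x,y). -/
open Metric Set MeasureTheory Filter
open scoped ENNReal NNReal

noncomputable section

variable {X : Type*}

/-- The quasimetric `d_a` on the sphericalization `X̂ = X ∪ {∞}`, with `none` playing
the role of the point `∞`. -/
noncomputable def sphDist [MetricSpace X] (a : X) : Option X → Option X → ℝ
  | some x, some y => dist x y / ((1 + dist x a) * (1 + dist y a))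
  | some x, none => 1 / (1 + dist x a)
  | none, some y => 1 / (1 + dist y a)
  | none, none => 0

/-- The sum `Σ_{j=1}^k d_a(x_{j-1}, x_j)` along a finite sequence (list) in `X̂`. -/
noncomputable def chainSum [MetricSpace X] (a : X) : List (Option X) → ℝ
  | [] => 0
  | [_] => 0
  | x :: y :: l => sphDist a x y + chainSum a (y :: l)

/-- The sphericalized distance `d̂(x,y) = inf Σ_{j=1}^k d_a(x_{j-1},x_j)`, the infimum
being taken over all finite sequences `x = x_0, x_1, …, x_k = y` in `X̂`. -/
noncomputable def sphHatDist [MetricSpace X] (a : X) (x y : Option X) : ℝ :=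
  sInf {s : ℝ | ∃ L : List (Option X),
    L.head? = some x ∧ L.getLast? = some y ∧ chainSum a L = s}

/-- `d̂(x) = d̂(x,∞) = 1/(1+|x|)` for `x ∈ X`. -/
noncomputable def sphD [MetricSpace X] (a x : X) : ℝ := 1 / (1 + dist x a)

/-
Chain infima of a symmetric function vanishing on the diagonal are always pseudometrics, so the
content is the lower bound. Put `w x = d_a(x, ∞) = 1 / (1 + |x|)`, so that
`d_a(x, y) = d(x, y) w(x) w(y)` in `X`, and suppose `w y ≤ w x`. If a chain from `x` to `y` stays
where `w ≥ w(x) / 2`, each of its steps costs at least `(w(x) / 2)²` times its `d`-length, hence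
the chain costs at least `d(x, y) (w(x) / 2)² ≥ d_a(x, y) / 4`. Otherwise it visits a point with
`w < w(x) / 2`; as `w` changes along a step by at most the cost of the step, the chain costs at
least `w(x) / 2 ≥ (w x + w y) / 4 ≥ d_a(x, y) / 4`.
-/

section

variable [MetricSpace X] (a : X)

lemma sphDist_nonneg (x y : Option X) : 0 ≤ sphDist a x y := by
  cases x <;> cases y <;> simp only [sphDist] <;> positivity

lemma sphDist_self (x : Option X) : sphDist a x x = 0 := by
  cases x <;> simp [sphDist]

lemma sphDist_comm (x y : Option X) : sphDist a x y = sphDist a y x := by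
  cases x <;> cases y <;> simp only [sphDist]
  rw [dist_comm, mul_comm]

lemma sphDist_some_none_pos (x : X) : 0 < sphDist a (some x) none := by
  simp only [sphDist]
  positivity

lemma sphDist_some_some (x y : X) :
    sphDist a (some x) (some y) =
      dist x y * (sphDist a (some x) none * sphDist a (some y) none) := by
  simp only [sphDist]
  field_simp

lemma eq_of_sphDist_eq_zero {x y : Option X} (h : sphDist a x y = 0) : x = y := by
  match x, y with
  | none, none => rfl
  | some x, none => exact absurd h (sphDist_some_none_pos a x).ne'
  | none, some y => exact absurd h (sphDist_some_none_pos a y).ne'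
  | some x, some y =>
    have hw := mul_pos (sphDist_some_none_pos a x) (sphDist_some_none_pos a y)
    rw [sphDist_some_some, mul_eq_zero_iff_right hw.ne', dist_eq_zero] at h
    rw [h]

lemma sphDist_none_le_add (x y : Option X) :
    sphDist a x none ≤ sphDist a x y + sphDist a y none := by
  match x, y with
  | _, none => simp [sphDist]
  | none, some y => simpa [sphDist] using add_nonneg zero_le_one dist_nonneg
  | some x, some y =>
    simp only [sphDist]
    field_simp
    linarith [dist_triangle_left y a x]

lemma sphDist_le_add_none (x y : Option X) :
    sphDist a x y ≤ sphDist a x none + sphDist a y none := by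
  match x, y with
  | _, none => simp [sphDist]
  | none, some y => simp [sphDist]
  | some x, some y =>
    simp only [sphDist]
    field_simp
    linarith [dist_triangle_right x y a]

lemma chainSum_nonneg : ∀ L : List (Option X), 0 ≤ chainSum a L
  | [] => le_rfl
  | [_] => le_rfl
  | x :: y :: l => add_nonneg (sphDist_nonneg a x y) (chainSum_nonneg (y :: l))

lemma sphHatDist_le_chainSum {x y : Option X} {L : List (Option X)}
    (hx : L.head? = some x) (hy : L.getLast? = some y) : sphHatDist a x y ≤ chainSum a L := by
  refine csInf_le ⟨0, ?_⟩ ⟨L, hx, hy, rfl⟩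
  rintro _ ⟨L, -, -, rfl⟩
  exact chainSum_nonneg a L

lemma le_sphHatDist {x y : Option X} {c : ℝ}
    (h : ∀ l : List (Option X), (x :: l).getLast? = some y → c ≤ chainSum a (x :: l)) :
    c ≤ sphHatDist a x y := by
  refine le_csInf ⟨_, [x, y], rfl, rfl, rfl⟩ ?_
  rintro _ ⟨L, hx, hy, rfl⟩
  obtain ⟨l, rfl⟩ := List.head?_eq_some_iff.1 hx
  exact h l hy

lemma sphHatDist_le_sphDist (x y : Option X) : sphHatDist a x y ≤ sphDist a x y :=
  (sphHatDist_le_chainSum a (L := [x, y]) rfl rfl).trans_eq (add_zero _)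

/-- The function `d_a` with values in `ℝ≥0`, the form in which `PseudoMetricSpace.ofPreNNDist`
takes it. -/
def sphNNDist (x y : Option X) : ℝ≥0 := ⟨sphDist a x y, sphDist_nonneg a x y⟩

lemma coe_sphNNDist (x y : Option X) : (sphNNDist a x y : ℝ) = sphDist a x y := rfl

/-- The largest pseudometric on `X̂` below `d_a`. It is kept as a plain definition, not an instance,
because it depends on the base point. -/
@[reducible]
def sphPseudoMetricSpace : PseudoMetricSpace (Option X) :=
  .ofPreNNDist (sphNNDist a) (fun x => NNReal.eq (sphDist_self a x))
    fun x y => NNReal.eq (sphDist_comm a x y)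

lemma sphPseudoMetricSpace_dist_le_chainSum {x y : Option X} (l : List (Option X))
    (hy : (x :: l).getLast? = some y) :
    (sphPseudoMetricSpace a).dist x y ≤ chainSum a (x :: l) := by
  induction l generalizing x with
  | nil =>
    obtain rfl : x = y := by simpa using hy
    exact ((sphPseudoMetricSpace a).dist_self x).le
  | cons v l ih =>
    calc (sphPseudoMetricSpace a).dist x y
        ≤ (sphPseudoMetricSpace a).dist x v + (sphPseudoMetricSpace a).dist v y :=
          (sphPseudoMetricSpace a).dist_triangle x v y
      _ ≤ sphDist a x v + chainSum a (v :: l) :=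
          add_le_add (PseudoMetricSpace.dist_ofPreNNDist_le _ _ _ x v)
            (ih (List.getLast?_cons_cons ▸ hy))

lemma chainSum_cons_append_singleton (x y : Option X) (l : List (Option X)) :
    chainSum a (x :: (l ++ [y])) = ((x :: l).zipWith (sphNNDist a) (l ++ [y])).sum := by
  induction l generalizing x with
  | nil => simp [chainSum, coe_sphNNDist]
  | cons v l ih => simp [chainSum, ih, coe_sphNNDist]

lemma sphHatDist_eq_dist (x y : Option X) :
    sphHatDist a x y = (sphPseudoMetricSpace a).dist x y := by
  refine le_antisymm ?_ (le_sphHatDist a (sphPseudoMetricSpace_dist_le_chainSum a))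
  rw [PseudoMetricSpace.dist_ofPreNNDist, NNReal.coe_iInf]
  refine le_ciInf fun l => ?_
  rw [← chainSum_cons_append_singleton]
  exact sphHatDist_le_chainSum a rfl (by rw [← List.cons_append, List.getLast?_concat])

lemma sphHatDist_self (x : Option X) : sphHatDist a x x = 0 := by
  rw [sphHatDist_eq_dist]
  exact (sphPseudoMetricSpace a).dist_self x

lemma sphHatDist_comm (x y : Option X) : sphHatDist a x y = sphHatDist a y x := by
  simp only [sphHatDist_eq_dist]
  exact (sphPseudoMetricSpace a).dist_comm x y

lemma sphHatDist_triangle (x y z : Option X) :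
    sphHatDist a x z ≤ sphHatDist a x y + sphHatDist a y z := by
  simp only [sphHatDist_eq_dist]
  exact (sphPseudoMetricSpace a).dist_triangle x y z

lemma sphDist_none_sub_le_chainSum {x z : Option X} (l : List (Option X)) (hz : z ∈ x :: l) :
    sphDist a x none - sphDist a z none ≤ chainSum a (x :: l) := by
  induction l generalizing x with
  | nil =>
    obtain rfl : z = x := List.mem_singleton.1 hz
    exact (sub_self _).le
  | cons v l ih =>
    rcases List.mem_cons.1 hz with rfl | hz
    · exact (sub_self _).trans_le (chainSum_nonneg a _)
    · simp only [chainSum]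
      linarith [ih hz, sphDist_none_le_add a x v]

lemma dist_mul_sq_le_chainSum {m : ℝ} (hm : 0 < m) {x y : X} (l : List (Option X))
    (hy : (some x :: l).getLast? = some (some y))
    (hl : ∀ z ∈ some x :: l, m ≤ sphDist a z none) :
    dist x y * m ^ 2 ≤ chainSum a (some x :: l) := by
  induction l generalizing x with
  | nil =>
    obtain rfl : x = y := by simpa using hy
    simp [chainSum]
  | cons v l ih =>
    obtain ⟨hx, hvl⟩ := List.forall_mem_cons.1 hl
    have hv := hvl v List.mem_cons_self
    match v with
    | none => exact absurd (sphDist_self a none ▸ hv) hm.not_ge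
    | some v =>
      have hstep : dist x v * m ^ 2 ≤ sphDist a (some x) (some v) := by
        rw [sphDist_some_some, sq]
        gcongr
        exact sphDist_nonneg a _ _
      calc dist x y * m ^ 2 ≤ (dist x v + dist v y) * m ^ 2 := by
            gcongr
            exact dist_triangle x v y
        _ = dist x v * m ^ 2 + dist v y * m ^ 2 := add_mul _ _ _
        _ ≤ sphDist a (some x) (some v) + chainSum a (some v :: l) :=
            add_le_add hstep (ih (List.getLast?_cons_cons ▸ hy) hvl)

lemma quarter_sphDist_le_chainSum {x y : Option X} (hxy : sphDist a y none ≤ sphDist a x none)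
    (l : List (Option X)) (hy : (x :: l).getLast? = some y) :
    1 / 4 * sphDist a x y ≤ chainSum a (x :: l) := by
  have hsum := sphDist_le_add_none a x y
  by_cases hl : ∀ z ∈ x :: l, sphDist a x none / 2 ≤ sphDist a z none
  · match x, y with
    | none, _ => linarith [sphDist_self a none, chainSum_nonneg a (none :: l)]
    | some x, none =>
      linarith [hl none (List.mem_of_getLast? hy), sphDist_self a none, sphDist_some_none_pos a x]
    | some x, some y =>
      refine le_trans ?_ (dist_mul_sq_le_chainSum a (half_pos (sphDist_some_none_pos a x)) l hy hl)
      calc 1 / 4 * sphDist a (some x) (some y)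
          = 1 / 4 * (dist x y * (sphDist a (some x) none * sphDist a (some y) none)) := by
            rw [sphDist_some_some]
        _ ≤ 1 / 4 * (dist x y * (sphDist a (some x) none * sphDist a (some x) none)) := by
            gcongr
            exact sphDist_nonneg a _ _
        _ = dist x y * (sphDist a (some x) none / 2) ^ 2 := by ring
  · push Not at hl
    obtain ⟨z, hz, hzx⟩ := hl
    linarith [sphDist_none_sub_le_chainSum a l hz]

lemma quarter_sphDist_le_sphHatDist (x y : Option X) :
    1 / 4 * sphDist a x y ≤ sphHatDist a x y := by
  wlog hxy : sphDist a y none ≤ sphDist a x none generalizing x y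
  · rw [sphDist_comm, sphHatDist_comm]
    exact this y x (le_of_not_ge hxy)
  exact le_sphHatDist a (quarter_sphDist_le_chainSum a hxy)

lemma eq_of_sphHatDist_eq_zero {x y : Option X} (h : sphHatDist a x y = 0) : x = y := by
  refine eq_of_sphDist_eq_zero a (le_antisymm ?_ (sphDist_nonneg a x y))
  linarith [quarter_sphDist_le_sphHatDist a x y]

end

theorem statement0_general [MetricSpace X] (a : X) :
    (∀ x : Option X, sphHatDist a x x = 0) ∧
    (∀ x y : Option X, sphHatDist a x y = sphHatDist a y x) ∧
    (∀ x y z : Option X,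
      sphHatDist a x z ≤ sphHatDist a x y + sphHatDist a y z) ∧
    (∀ x y : Option X, sphHatDist a x y = 0 → x = y) ∧
    (∀ x y : Option X,
      (1 / 4) * sphDist a x y ≤ sphHatDist a x y ∧
        sphHatDist a x y ≤ sphDist a x y) :=
  ⟨sphHatDist_self a, sphHatDist_comm a, sphHatDist_triangle a,
    fun _ _ => eq_of_sphHatDist_eq_zero a,
    fun x y => ⟨quarter_sphDist_le_sphHatDist a x y, sphHatDist_le_sphDist a x y⟩⟩

/-- `d̂` is a metric on `X̂` and `(1/4) d_a(x,y) ≤ d̂(x,y) ≤ d_a(x,y)`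
for all `x, y ∈ X̂`. -/
theorem statement0 [MetricSpace X]
    (hX : ¬ Bornology.IsBounded (Set.univ : Set X)) (a : X) :
    (∀ x : Option X, sphHatDist a x x = 0) ∧
    (∀ x y : Option X, sphHatDist a x y = sphHatDist a y x) ∧
    (∀ x y z : Option X,
      sphHatDist a x z ≤ sphHatDist a x y + sphHatDist a y z) ∧
    (∀ x y : Option X, sphHatDist a x y = 0 → x = y) ∧
    (∀ x y : Option X,
      (1 / 4) * sphDist a x y ≤ sphHatDist a x y ∧
        sphHatDist a x y ≤ sphDist a x y) :=
  statement0_general a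
end
end

section
/- For every x ∈ X and every r with 0 < r ≤ d̂(x)/3, one has B(x, 3r/(4 d̂(x)^2)) ⊂ B_a(x,r) ⊂ B(x, 3r/(2 d̂(x)^2)), where the outer balls are balls in (X,d) regarded as subsets of X̂. -/
open Metric Set MeasureTheory Filter
open scoped ENNReal NNReal

noncomputable section

variable {X : Type*}

/-!
By the triangle inequality `1 + |y|` differs from `1 + |x|` by at most `d(x,y)`. Hence
`d_a(x,y) < r`, that is, `d(x,y) < r (1 + |x|) (1 + |y|)`, is implied by
`(1 + r (1 + |x|)) d(x,y) < r (1 + |x|)²` and implies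
`(1 - r (1 + |x|)) d(x,y) < r (1 + |x|)²`. The bound `r ≤ θ d̂(x)` says that
`r (1 + |x|) ≤ θ`, which gives the constants `1 + θ` and `1 - θ`; for `θ = 1/3` they
are `4/3` and `2/3`.
-/

section Sphericalization

variable [MetricSpace X] {a x y : X} {r s c θ : ℝ}

theorem sphDist_some_some_lt_iff :
    sphDist a (some x) (some y) < r ↔
      dist x y < r * ((1 + dist x a) * (1 + dist y a)) :=
  div_lt_iff₀ (by positivity)

theorem sphD_pos : 0 < sphD a x := by
  unfold sphD
  positivity

theorem le_mul_sphD_iff : r ≤ θ * sphD a x ↔ r * (1 + dist x a) ≤ θ := by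
  rw [sphD, mul_one_div, le_div_iff₀ (by positivity)]

theorem lt_div_mul_sphD_sq_iff (hc : 0 < c) :
    s < r / (c * sphD a x ^ 2) ↔ c * s < r * (1 + dist x a) ^ 2 := by
  have hradius : r / (c * sphD a x ^ 2) = r * (1 + dist x a) ^ 2 / c := by
    unfold sphD
    field_simp
  rw [hradius, lt_div_iff₀ hc, mul_comm]

theorem image_ball_subset_sphDist_lt (hθ : 0 ≤ θ) (hr : r ≤ θ * sphD a x) :
    some '' ball x (r / ((1 + θ) * sphD a x ^ 2)) ⊆
      {y : Option X | sphDist a (some x) y < r} := by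
  rintro _ ⟨y, hy, rfl⟩
  rw [mem_ball', lt_div_mul_sphD_sq_iff (by linarith)] at hy
  rw [le_mul_sphD_iff] at hr
  have hr_nonneg : 0 ≤ r :=
    (pos_of_mul_pos_left ((by positivity : 0 ≤ (1 + θ) * dist x y).trans_lt hy)
      (by positivity)).le
  have htri : dist x a - dist x y ≤ dist y a := by linarith [dist_triangle x y a]
  refine sphDist_some_some_lt_iff.mpr ?_
  calc dist x y
      = (1 + θ) * dist x y - θ * dist x y := by ring
    _ ≤ (1 + θ) * dist x y - r * (1 + dist x a) * dist x y := by gcongr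
    _ < r * (1 + dist x a) ^ 2 - r * (1 + dist x a) * dist x y := by gcongr
    _ = r * ((1 + dist x a) * (1 + (dist x a - dist x y))) := by ring
    _ ≤ r * ((1 + dist x a) * (1 + dist y a)) := by gcongr

theorem not_sphDist_some_none_lt (hθ : θ ≤ 1) (hr : r ≤ θ * sphD a x) :
    ¬ sphDist a (some x) none < r :=
  not_lt.mpr (hr.trans (mul_le_of_le_one_left sphD_pos.le hθ))

theorem sphDist_lt_subset_image_ball (hθ : θ < 1) (hr : r ≤ θ * sphD a x) :
    {y : Option X | sphDist a (some x) y < r} ⊆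
      some '' ball x (r / ((1 - θ) * sphD a x ^ 2)) := by
  rintro (_ | y) hy
  · exact absurd hy (not_sphDist_some_none_lt hθ.le hr)
  refine mem_image_of_mem some ?_
  rw [mem_ball', lt_div_mul_sphD_sq_iff (by linarith)]
  replace hy := sphDist_some_some_lt_iff.mp hy
  rw [le_mul_sphD_iff] at hr
  have hr_nonneg : 0 ≤ r :=
    (pos_of_mul_pos_left (dist_nonneg.trans_lt hy) (by positivity)).le
  have htri : dist y a ≤ dist x a + dist x y := by linarith [dist_triangle_left y a x]
  calc (1 - θ) * dist x y
      = dist x y - θ * dist x y := by ring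
    _ ≤ dist x y - r * (1 + dist x a) * dist x y := by gcongr
    _ < r * ((1 + dist x a) * (1 + dist y a)) - r * (1 + dist x a) * dist x y := by gcongr
    _ ≤ r * ((1 + dist x a) * (1 + (dist x a + dist x y)))
          - r * (1 + dist x a) * dist x y := by gcongr
    _ = r * (1 + dist x a) ^ 2 := by ring

end Sphericalization

theorem statement7_general [MetricSpace X] (a x : X) {r θ : ℝ}
    (hθ₀ : 0 ≤ θ) (hθ₁ : θ < 1) (hr : r ≤ θ * sphD a x) :
    some '' ball x (r / ((1 + θ) * sphD a x ^ 2)) ⊆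
      {y : Option X | sphDist a (some x) y < r} ∧
    {y : Option X | sphDist a (some x) y < r} ⊆
      some '' ball x (r / ((1 - θ) * sphD a x ^ 2)) :=
  ⟨image_ball_subset_sphDist_lt hθ₀ hr, sphDist_lt_subset_image_ball hθ₁ hr⟩

/-- For `x ∈ X` and `0 < r ≤ d̂(x)/3` one has
`B(x, 3r/(4 d̂(x)²)) ⊂ B_a(x,r) ⊂ B(x, 3r/(2 d̂(x)²))`, the outer balls being balls
in `(X,d)` regarded as subsets of `X̂`. -/
theorem statement7 [MetricSpace X]
    (hX : ¬ Bornology.IsBounded (Set.univ : Set X)) (a : X)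
    (x : X) (r : ℝ) (hr : 0 < r) (hr3 : r ≤ sphD a x / 3) :
    Option.some '' Metric.ball x (3 * r / (4 * (sphD a x) ^ 2)) ⊆
      {y : Option X | sphDist a (some x) y < r} ∧
    {y : Option X | sphDist a (some x) y < r} ⊆
      Option.some '' Metric.ball x (3 * r / (2 * (sphD a x) ^ 2)) := by
  convert statement7_general a x (r := r) (θ := 1 / 3) (by norm_num) (by norm_num)
    (by linarith) using 4 <;> ring
end
end
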